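/- arXiv:2503.00970 — 2 statements merged into one kernel-verified Lean document; each statement's English description precedes it below -/
import Mathlib

section
/- Let C ⊆ ℝⁿ be a pointed n-dimensional closed convex cone, ω ⊆ Ω = S^{n-1} ∩ int C° a nonempty compact set, μ a nonzero finite Borel measure on ω, and p < 0. Then there exists K ∈ 𝒦(C,ω) such that for every continuous f : ω → (0,∞), γⁿ([f]) / ∫_ω f(u)^p dμ(u) ≤ γⁿ(K) / ∫_ω (−h_K(u))^p dμ(u); that is, the functional φ_μ(f) = γⁿ([f]) / ∫_ω f^p dμ attains its supremum over C⁺(ω) at the (absolute) support function of some K ∈ 𝒦(C,ω). -/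
open MeasureTheory Metric Set Filter
open scoped RealInnerProductSpace Pointwise Topology ENNReal

noncomputable section

/-- `ℝⁿ` as Euclidean space. -/
abbrev En (n : ℕ) := EuclideanSpace ℝ (Fin n)

/-- The standard Gaussian measure of a set `A ⊆ ℝⁿ`:
`γⁿ(A) = (2π)^{-n/2} ∫_A e^{-‖x‖²/2} dx`. -/
def gaussianMeasure (n : ℕ) (A : Set (En n)) : ℝ :=
  (2 * Real.pi) ^ (-(n : ℝ) / 2) * ∫ x in A, Real.exp (-‖x‖ ^ 2 / 2)

/-- A pointed (no lines), `n`-dimensional (nonempty interior), closed convex cone. -/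
def IsPointedCone {n : ℕ} (C : Set (En n)) : Prop :=
  IsClosed C ∧ Convex ℝ C ∧ (∀ x ∈ C, ∀ c : ℝ, 0 ≤ c → c • x ∈ C) ∧
    (interior C).Nonempty ∧ ∀ x ∈ C, -x ∈ C → x = 0

/-- The polar cone `C° = {x : ⟨x,y⟩ ≤ 0 ∀ y ∈ C}`. -/
def polarCone {n : ℕ} (C : Set (En n)) : Set (En n) := {x | ∀ y ∈ C, ⟪x, y⟫ ≤ 0}

/-- `Ω = S^{n-1} ∩ int C°`. -/
def OmegaSet {n : ℕ} (C : Set (En n)) : Set (En n) :=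
  sphere (0 : En n) 1 ∩ interior (polarCone C)

/-- A pseudo-cone: nonempty closed convex set not containing the origin with `λK ⊆ K` for `λ ≥ 1`. -/
def IsPseudoCone {n : ℕ} (K : Set (En n)) : Prop :=
  K.Nonempty ∧ IsClosed K ∧ Convex ℝ K ∧ (0 : En n) ∉ K ∧
    ∀ c : ℝ, 1 ≤ c → c • K ⊆ K

/-- The recession cone `rec K = {z : K + z ⊆ K}`. -/
def recessionCone {n : ℕ} (K : Set (En n)) : Set (En n) := {z | ∀ x ∈ K, x + z ∈ K}

/-- A `C`-pseudo-cone: a pseudo-cone whose recession cone is `C`. -/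
def IsCPseudoCone {n : ℕ} (C K : Set (En n)) : Prop :=
  IsPseudoCone K ∧ recessionCone K = C

/-- The support function `h_K(u) = sup {⟨x,u⟫ : x ∈ K}`. -/
def suppFn {n : ℕ} (K : Set (En n)) (u : En n) : ℝ := sSup ((fun x => ⟪x, u⟫) '' K)

/-- The Wulff shape `[f] = C ∩ ⋂_{u ∈ ω} {y : ⟨y,u⟩ ≤ -f(u)}`. -/
def wulffShape {n : ℕ} (C ω : Set (En n)) (f : En n → ℝ) : Set (En n) :=
  C ∩ ⋂ u ∈ ω, {y | ⟪y, u⟫ ≤ -f u}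

/-- `K ∈ 𝒦(C,ω)`: `K` is a `C`-pseudo-cone that is `C`-determined by `ω`. -/
def InKClass {n : ℕ} (C ω K : Set (En n)) : Prop :=
  IsCPseudoCone C K ∧ K = C ∩ ⋂ u ∈ ω, {y | ⟪y, u⟫ ≤ suppFn K u}

end

/-!
Replacing `f` by the absolute support function `h = -h_K` of `K = [f]` does not change the Wulff
shape and increases `f`, hence increases `φ_μ`. If `r` is the distance from `K` to the origin and
`⟨x, u⟩ ≤ -δ‖x‖` for `x ∈ C` and `u ∈ ω`, then `h` is `(r / δ)`-Lipschitz with values in `[δr, r]`,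
and `φ_μ(h) ≤ r^{-p} γⁿ{‖x‖ ≥ r} / μ(ω)`. This bound vanishes as `r → 0` and as `r → ∞`, so only
functions with `r` in a compact subinterval of `(0, ∞)` compete for the supremum. They lie in a
class that is compact by Arzelà–Ascoli, on which `φ_μ` is upper semicontinuous. Of the Gaussian
measure the argument uses only finiteness and the moment of order `-p`.
-/

open scoped NNReal BoundedContinuousFunction

section Tail

variable {E : Type*} [NormedAddCommGroup E] [MeasurableSpace E]
  {ν : Measure E} {q : ℝ}

theorem tendsto_rpow_mul_measureReal_le_norm_atTop [OpensMeasurableSpace E] (hq : 0 ≤ q)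
    (hν : Integrable (fun x => ‖x‖ ^ q) ν) :
    Tendsto (fun b => b ^ q * ν.real {x | b ≤ ‖x‖}) atTop (𝓝 0) := by
  have hmeas (b : ℝ) : MeasurableSet {x : E | b ≤ ‖x‖} :=
    measurableSet_le (by fun_prop) (by fun_prop)
  have hdom : Tendsto (fun b => ∫ x, {x : E | b ≤ ‖x‖}.indicator (fun _ => b ^ q) x ∂ν) atTop
      (𝓝 (∫ _, 0 ∂ν)) := by
    refine tendsto_integral_filter_of_dominated_convergence (fun x => ‖x‖ ^ q)
      (.of_forall fun b => aestronglyMeasurable_const.indicator (hmeas b)) ?_ hν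
      (.of_forall fun x => ?_)
    · filter_upwards [eventually_ge_atTop 0] with b hb
      refine .of_forall fun x => ?_
      by_cases hx : x ∈ {x : E | b ≤ ‖x‖}
      · rw [indicator_of_mem hx, Real.norm_of_nonneg (by positivity)]
        exact Real.rpow_le_rpow hb hx hq
      · rw [indicator_of_notMem hx, norm_zero]
        positivity
    · refine tendsto_const_nhds.congr' ?_
      filter_upwards [eventually_gt_atTop ‖x‖] with b hb
      exact (indicator_of_notMem (s := {x : E | b ≤ ‖x‖}) (not_le.2 hb) _).symm
  simpa [integral_indicator_const, hmeas, mul_comm] using hdom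

theorem tendsto_rpow_mul_measureReal_le_norm_nhdsGT_zero [IsFiniteMeasure ν] (hq : 0 < q) :
    Tendsto (fun b => b ^ q * ν.real {x | b ≤ ‖x‖}) (𝓝[>] 0) (𝓝 0) := by
  have hpow : Tendsto (fun b : ℝ => b ^ q) (𝓝[>] 0) (𝓝 0) := by
    simpa [Real.zero_rpow hq.ne'] using
      (Real.continuousAt_rpow_const 0 q (.inr hq.le)).tendsto.mono_left nhdsWithin_le_nhds
  refine squeeze_zero' ?_ ?_ (by simpa using hpow.mul_const (ν.real univ))
  all_goals
    filter_upwards [self_mem_nhdsWithin] with b hb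
    have : 0 < b := hb
  · positivity
  · exact mul_le_mul_of_nonneg_left (measureReal_mono (subset_univ _)) (by positivity)

theorem exists_Icc_of_le_rpow_mul_measureReal_le_norm [OpensMeasurableSpace E]
    [IsFiniteMeasure ν] (hq : 0 < q) (hν : Integrable (fun x => ‖x‖ ^ q) ν) {ε : ℝ} (hε : 0 < ε) :
    ∃ b₀ > 0, ∃ b₁, ∀ b > 0, ε ≤ b ^ q * ν.real {x | b ≤ ‖x‖} → b ∈ Icc b₀ b₁ := by
  obtain ⟨b₁, hb₁⟩ := ((tendsto_rpow_mul_measureReal_le_norm_atTop hq.le hν).eventually_lt_const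
    hε).exists_forall_of_atTop
  obtain ⟨b₀, hb₀, hsmall⟩ := mem_nhdsGT_iff_exists_Ioo_subset.1
    ((tendsto_rpow_mul_measureReal_le_norm_nhdsGT_zero (ν := ν) hq).eventually_lt_const hε)
  refine ⟨b₀, hb₀, b₁, fun b hb hle => ⟨?_, ?_⟩⟩
  · exact le_of_not_gt fun hlt => (hsmall ⟨hb, hlt⟩ : _ < ε).not_ge hle
  · exact le_of_not_gt fun hlt => (hb₁ b hlt.le).not_ge hle

end Tail

section NegPower

variable {X : Type*} [TopologicalSpace X] [T2Space X] [MeasurableSpace X] [BorelSpace X]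
  {s : Set X} {μ : Measure X} [IsFiniteMeasure μ] {p : ℝ} {f g : X → ℝ}

theorem integrableOn_rpow_of_continuousOn (hs : IsCompact s) (hf : ContinuousOn f s)
    (hf₀ : ∀ x ∈ s, 0 < f x) : IntegrableOn (fun x => f x ^ p) s μ :=
  (hf.rpow_const fun x hx => .inl (hf₀ x hx).ne').integrableOn_compact hs

theorem setIntegral_rpow_le_of_le (hs : IsCompact s) (hp : p ≤ 0) (hf : ContinuousOn f s)
    (hf₀ : ∀ x ∈ s, 0 < f x) (hg : ContinuousOn g s) (hfg : ∀ x ∈ s, f x ≤ g x) :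
    ∫ x in s, g x ^ p ∂μ ≤ ∫ x in s, f x ^ p ∂μ :=
  setIntegral_mono_on
    (integrableOn_rpow_of_continuousOn hs hg fun x hx => (hf₀ x hx).trans_le (hfg x hx))
    (integrableOn_rpow_of_continuousOn hs hf hf₀) hs.measurableSet
    fun x hx => Real.rpow_le_rpow_of_nonpos (hf₀ x hx) (hfg x hx) hp

theorem rpow_mul_measureReal_le_setIntegral_rpow (hs : IsCompact s) (hp : p ≤ 0)
    (hf : ContinuousOn f s) (hf₀ : ∀ x ∈ s, 0 < f x) {b : ℝ} (hb : ∀ x ∈ s, f x ≤ b) :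
    b ^ p * μ.real s ≤ ∫ x in s, f x ^ p ∂μ := by
  simpa [mul_comm] using setIntegral_rpow_le_of_le (μ := μ) hs hp hf hf₀ continuousOn_const hb

theorem setIntegral_rpow_pos (hs : IsCompact s) (hμ : μ s ≠ 0) (hf : ContinuousOn f s)
    (hf₀ : ∀ x ∈ s, 0 < f x) : 0 < ∫ x in s, f x ^ p ∂μ := by
  have hpos : ∀ x ∈ s, 0 < f x ^ p := fun x hx => Real.rpow_pos_of_pos (hf₀ x hx) p
  have hae : 0 ≤ᵐ[μ.restrict s] fun x => f x ^ p :=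
    (ae_restrict_mem hs.measurableSet).mono fun x hx => (hpos x hx).le
  have hsupp : s ⊆ Function.support fun x => f x ^ p := fun x hx => (hpos x hx).ne'
  rw [setIntegral_pos_iff_support_of_nonneg_ae hae (integrableOn_rpow_of_continuousOn hs hf hf₀),
    inter_eq_right.2 hsupp]
  exact pos_iff_ne_zero.2 hμ

theorem tendsto_setIntegral_add_const_rpow (hs : IsCompact s) (hp : p ≤ 0)
    (hf : ContinuousOn f s) (hf₀ : ∀ x ∈ s, 0 < f x) :
    Tendsto (fun ε => ∫ x in s, (f x + ε) ^ p ∂μ) (𝓝[>] 0) (𝓝 (∫ x in s, f x ^ p ∂μ)) := by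
  refine tendsto_integral_filter_of_dominated_convergence (fun x => f x ^ p) ?_ ?_
    (integrableOn_rpow_of_continuousOn hs hf hf₀) ?_
  · filter_upwards [self_mem_nhdsWithin] with ε hε
    exact (integrableOn_rpow_of_continuousOn hs (hf.add continuousOn_const)
      fun x hx => add_pos (hf₀ x hx) hε).aestronglyMeasurable
  · filter_upwards [self_mem_nhdsWithin] with ε (hε : 0 < ε)
    filter_upwards [ae_restrict_mem hs.measurableSet] with x hx
    have := hf₀ x hx
    rw [Real.norm_of_nonneg (by positivity)]
    exact Real.rpow_le_rpow_of_nonpos this (by linarith) hp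
  · filter_upwards [ae_restrict_mem hs.measurableSet] with x hx
    have hadd : Tendsto (fun ε => f x + ε) (𝓝[>] 0) (𝓝 (f x)) :=
      ((continuous_const_add (f x)).tendsto' 0 _ (add_zero _)).mono_left nhdsWithin_le_nhds
    exact hadd.rpow_const (.inl (hf₀ x hx).ne')

end NegPower

section LipschitzIcc

variable {X : Type*} [PseudoMetricSpace X]

/-- The real functions that, on `s`, are `L`-Lipschitz with values in `[a, b]`. Nothing is required
of their values off `s`. -/
def lipschitzIcc (s : Set X) (L : ℝ≥0) (a b : ℝ) : Set (X → ℝ) :=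
  {f | LipschitzOnWith L f s ∧ MapsTo f s (Icc a b)}

theorem isCompact_setOf_lipschitzWith_mem [CompactSpace X] (L : ℝ≥0) {t : Set ℝ}
    (ht : IsCompact t) : IsCompact {φ : X →ᵇ ℝ | LipschitzWith L φ ∧ ∀ x, φ x ∈ t} := by
  have hlip : IsClosed {φ : X →ᵇ ℝ | LipschitzWith L φ} :=
    (isClosed_setOfPred_lipschitzWith (α := X) (β := ℝ) L).preimage
      BoundedContinuousFunction.continuous_coe
  have hmem : IsClosed {φ : X →ᵇ ℝ | ∀ x, φ x ∈ t} := by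
    rw [ofPred_forall]
    exact isClosed_iInter fun x => ht.isClosed.preimage (continuous_eval_const x)
  exact BoundedContinuousFunction.arzela_ascoli₂ t ht _ (hlip.inter hmem) (fun φ x hφ => hφ.2 x)
    (LipschitzWith.uniformEquicontinuous _ L fun φ => φ.2.1).equicontinuous

theorem extend_mem_lipschitzIcc {s : Set X} {L : ℝ≥0} {a b : ℝ} {φ : s → ℝ}
    (hφ : LipschitzWith L φ) (hval : ∀ x, φ x ∈ Icc a b) :
    Function.extend Subtype.val φ 0 ∈ lipschitzIcc s L a b := by
  have hext (x : s) : Function.extend Subtype.val φ 0 (x : X) = φ x :=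
    Subtype.val_injective.extend_apply _ _ x
  have hres : s.domRestrict (Function.extend Subtype.val φ 0) = φ := funext hext
  refine ⟨by rw [lipschitzOnWith_iff_restrict, hres]; exact hφ, fun x hx => ?_⟩
  rw [hext ⟨x, hx⟩]
  exact hval _

/-- The hypothesis on `Φ` is upper semicontinuity for uniform convergence on `s`. -/
theorem exists_isMaxOn_lipschitzIcc {s : Set X} (hs : IsCompact s) {L : ℝ≥0} {a b : ℝ}
    {Φ : (X → ℝ) → ℝ}
    (hΦ : ∀ g ∈ lipschitzIcc s L a b, ∀ c > Φ g, ∃ ε > 0, ∀ f ∈ lipschitzIcc s L a b,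
      (∀ x ∈ s, |f x - g x| < ε) → Φ f < c)
    (hne : (lipschitzIcc s L a b).Nonempty) :
    ∃ g ∈ lipschitzIcc s L a b, IsMaxOn Φ (lipschitzIcc s L a b) g := by
  have : CompactSpace s := isCompact_iff_compactSpace.1 hs
  let T : Set (s →ᵇ ℝ) := {φ | LipschitzWith L φ ∧ ∀ x, φ x ∈ Icc a b}
  let extend (φ : s →ᵇ ℝ) : X → ℝ := Function.extend Subtype.val φ 0
  have extend_apply (φ : s →ᵇ ℝ) (x : s) : extend φ x = φ x :=
    Subtype.val_injective.extend_apply _ _ x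
  have extend_mem : ∀ φ ∈ T, extend φ ∈ lipschitzIcc s L a b := fun φ hφ =>
    extend_mem_lipschitzIcc hφ.1 hφ.2
  have exists_restrict : ∀ f ∈ lipschitzIcc s L a b, ∃ φ ∈ T, ∀ x : s, φ x = f x := fun f hf =>
    have hlip := lipschitzOnWith_iff_restrict.1 hf.1
    ⟨.mkOfCompact ⟨_, hlip.continuous⟩, ⟨hlip, fun x => hf.2 x.2⟩, fun _ => rfl⟩
  have husc : UpperSemicontinuousOn (Φ ∘ extend) T := fun φ hφ c hc => by
    obtain ⟨ε, hε, h⟩ := hΦ _ (extend_mem φ hφ) c hc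
    filter_upwards [self_mem_nhdsWithin, mem_nhdsWithin_of_mem_nhds (ball_mem_nhds φ hε)]
      with ψ hψT hψ
    refine h _ (extend_mem ψ hψT) fun x hx => ?_
    rw [extend_apply ψ ⟨x, hx⟩, extend_apply φ ⟨x, hx⟩, ← Real.dist_eq]
    exact (BoundedContinuousFunction.dist_coe_le_dist _).trans_lt hψ
  obtain ⟨f₀, hf₀⟩ := hne
  obtain ⟨φ₀, hφ₀, -⟩ := exists_restrict f₀ hf₀
  obtain ⟨φ, hφ, hmax⟩ :=
    husc.exists_isMaxOn ⟨φ₀, hφ₀⟩ (isCompact_setOf_lipschitzWith_mem L isCompact_Icc)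
  refine ⟨extend φ, extend_mem φ hφ, fun f hf => ?_⟩
  obtain ⟨ψ, hψ, hψf⟩ := exists_restrict f hf
  refine (le_of_forall_gt fun c hc => ?_).trans (isMaxOn_iff.1 hmax ψ hψ)
  obtain ⟨ε, hε, h⟩ := hΦ _ (extend_mem ψ hψ) c hc
  refine h f hf fun x hx => ?_
  rwa [extend_apply ψ ⟨x, hx⟩, hψf, sub_self, abs_zero]

end LipschitzIcc

section SupportFunction

variable {n : ℕ} {K : Set (En n)} {ω : Set (En n)} {u : En n} {δ a : ℝ}

theorem suppFn_le (hK : K.Nonempty) (h : ∀ x ∈ K, ⟪x, u⟫ ≤ a) : suppFn K u ≤ a :=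
  csSup_le (hK.image _) (forall_mem_image.2 h)

theorem inner_le_suppFn (h : ∀ x ∈ K, ⟪x, u⟫ ≤ a) {x : En n} (hx : x ∈ K) :
    ⟪x, u⟫ ≤ suppFn K u :=
  le_csSup ⟨a, forall_mem_image.2 h⟩ (mem_image_of_mem _ hx)

theorem neg_suppFn_le_infDist (hK : K.Nonempty) (hu : ‖u‖ ≤ 1) (h : ∀ x ∈ K, ⟪x, u⟫ ≤ a) :
    -suppFn K u ≤ infDist 0 K := by
  refine (le_infDist hK).2 fun x hx => ?_
  have hxu : |⟪x, u⟫| ≤ ‖x‖ :=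
    (abs_real_inner_le_norm x u).trans (mul_le_of_le_one_right (norm_nonneg x) hu)
  rw [dist_zero_left]
  linarith [inner_le_suppFn h hx, neg_abs_le ⟪x, u⟫]

theorem mul_infDist_le_neg_suppFn (hK : K.Nonempty) (hδ : 0 ≤ δ)
    (h : ∀ x ∈ K, ⟪x, u⟫ ≤ -(δ * ‖x‖)) : δ * infDist 0 K ≤ -suppFn K u := by
  refine le_neg_of_le_neg (suppFn_le hK fun x hx => (h x hx).trans ?_)
  have : infDist 0 K ≤ ‖x‖ := by simpa using infDist_le_dist_of_mem (x := 0) hx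
  gcongr

/-- Only the points of norm at most `infDist 0 K / δ` contribute to the support function. -/
theorem lipschitzOnWith_suppFn (hK : K.Nonempty) (hδ : 0 < δ) (hω : ∀ u ∈ ω, ‖u‖ ≤ 1)
    (h : ∀ u ∈ ω, ∀ x ∈ K, ⟪x, u⟫ ≤ -(δ * ‖x‖)) :
    LipschitzOnWith (infDist 0 K / δ).toNNReal (suppFn K) ω := by
  have hbdd : ∀ u ∈ ω, ∀ x ∈ K, ⟪x, u⟫ ≤ 0 := fun u hu x hx =>
    (h u hu x hx).trans (neg_nonpos.2 (by positivity))
  refine .of_le_add_mul' _ fun v hv u hu => suppFn_le hK fun x hx => ?_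
  rcases le_or_gt ‖x‖ (infDist 0 K / δ) with hnear | hfar
  · calc ⟪x, v⟫ = ⟪x, u⟫ + ⟪x, v - u⟫ := by rw [inner_sub_right]; ring
      _ ≤ suppFn K u + ‖x‖ * ‖v - u‖ :=
        add_le_add (inner_le_suppFn (hbdd u hu) hx) (real_inner_le_norm _ _)
      _ ≤ suppFn K u + infDist 0 K / δ * dist v u := by rw [dist_eq_norm]; gcongr
  · have hfar' : infDist 0 K < δ * ‖x‖ := (div_lt_iff₀' hδ).1 hfar
    have hnonneg : 0 ≤ infDist 0 K / δ * dist v u :=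
      mul_nonneg (div_nonneg infDist_nonneg hδ.le) dist_nonneg
    linarith [h v hv x hx, neg_suppFn_le_infDist hK (hω u hu) (hbdd u hu)]

theorem neg_suppFn_mem_lipschitzIcc (hK : K.Nonempty) (hδ : 0 < δ) (hω : ∀ u ∈ ω, ‖u‖ ≤ 1)
    (h : ∀ u ∈ ω, ∀ x ∈ K, ⟪x, u⟫ ≤ -(δ * ‖x‖)) {b₀ b₁ : ℝ} (hb : infDist 0 K ∈ Icc b₀ b₁) :
    -suppFn K ∈ lipschitzIcc ω (b₁ / δ).toNNReal (δ * b₀) b₁ := by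
  refine ⟨(lipschitzOnWith_suppFn hK hδ hω h).neg.weaken ?_, fun u hu => ⟨?_, ?_⟩⟩
  · have := hb.2
    gcongr
  · exact (mul_le_mul_of_nonneg_left hb.1 hδ.le).trans (mul_infDist_le_neg_suppFn hK hδ.le (h u hu))
  · exact (neg_suppFn_le_infDist hK (hω u hu) (a := 0) fun x hx =>
      (h u hu x hx).trans (neg_nonpos.2 (by positivity))).trans hb.2

end SupportFunction

section WulffShape

variable {n : ℕ} {C ω : Set (En n)} {f g : En n → ℝ} {δ : ℝ}

theorem mem_wulffShape {x : En n} : x ∈ wulffShape C ω f ↔ x ∈ C ∧ ∀ u ∈ ω, ⟪x, u⟫ ≤ -f u := by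
  simp [wulffShape]

theorem isClosed_wulffShape (hC : IsClosed C) (f : En n → ℝ) : IsClosed (wulffShape C ω f) :=
  hC.inter <| isClosed_biInter fun _ _ => isClosed_le (by fun_prop) continuous_const

theorem convex_wulffShape (hC : Convex ℝ C) (f : En n → ℝ) : Convex ℝ (wulffShape C ω f) :=
  hC.inter <| convex_iInter₂ fun u _ => convex_halfSpace_le ((innerₛₗ ℝ).flip u).isLinear _

theorem wulffShape_subset_of_le (hfg : ∀ u ∈ ω, f u ≤ g u) :
    wulffShape C ω g ⊆ wulffShape C ω f := fun _ hx =>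
  ⟨hx.1, mem_iInter₂.2 fun u hu =>
    ((mem_wulffShape.1 hx).2 u hu).trans (neg_le_neg (hfg u hu))⟩

theorem biInter_wulffShape_sub_const :
    ⋂ ε > (0 : ℝ), wulffShape C ω (fun u => f u - ε) = wulffShape C ω f := by
  refine Subset.antisymm (fun x hx => ?_) (subset_iInter₂ fun ε hε =>
    wulffShape_subset_of_le fun u _ => sub_le_self _ (le_of_lt hε))
  have hx' : ∀ ε > 0, x ∈ C ∧ ∀ u ∈ ω, ⟪x, u⟫ ≤ -(f u - ε) := fun ε hε =>
    mem_wulffShape.1 (mem_iInter₂.1 hx ε hε)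
  refine mem_wulffShape.2 ⟨(hx' 1 one_pos).1, fun u hu => le_of_forall_pos_le_add fun ε hε => ?_⟩
  linarith [(hx' ε hε).2 u hu]

theorem wulffShape_nonempty (hsmul : ∀ x ∈ C, ∀ c : ℝ, 0 ≤ c → c • x ∈ C) (hδ : 0 < δ)
    (hneg : ∀ u ∈ ω, ∀ x ∈ C, ⟪x, u⟫ ≤ -(δ * ‖x‖)) {x : En n} (hx : x ∈ C) (hx₀ : x ≠ 0)
    (hf : BddAbove (f '' ω)) : (wulffShape C ω f).Nonempty := by
  obtain ⟨M, hM⟩ := hf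
  have : 0 < ‖x‖ := norm_pos_iff.2 hx₀
  have hmem : (|M| / (δ * ‖x‖)) • x ∈ C := hsmul x hx _ (by positivity)
  refine ⟨_, mem_wulffShape.2 ⟨hmem, fun u hu => ?_⟩⟩
  calc ⟪(|M| / (δ * ‖x‖)) • x, u⟫ ≤ -(δ * ‖(|M| / (δ * ‖x‖)) • x‖) := hneg u hu _ hmem
    _ = -|M| := by
      rw [norm_smul, Real.norm_of_nonneg (by positivity)]
      field_simp
    _ ≤ -f u := neg_le_neg ((hM (mem_image_of_mem f hu)).trans (le_abs_self M))

theorem le_neg_suppFn_wulffShape (hne : (wulffShape C ω f).Nonempty) {u : En n} (hu : u ∈ ω) :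
    f u ≤ (-suppFn (wulffShape C ω f)) u :=
  le_neg_of_le_neg (suppFn_le hne fun _ hx => (mem_wulffShape.1 hx).2 u hu)

theorem wulffShape_neg_suppFn_wulffShape (hne : (wulffShape C ω f).Nonempty) :
    wulffShape C ω (-suppFn (wulffShape C ω f)) = wulffShape C ω f := by
  refine (wulffShape_subset_of_le fun u => le_neg_suppFn_wulffShape hne).antisymm fun x hx =>
    mem_wulffShape.2 ⟨hx.1, fun u hu => ?_⟩
  rw [Pi.neg_apply, neg_neg]
  exact inner_le_suppFn (fun y hy => (mem_wulffShape.1 hy).2 u hu) hx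

end WulffShape

section Cone

variable {n : ℕ} {C K ω : Set (En n)} {f : En n → ℝ}

/-- Compactness keeps `ω` at a positive distance `δ` from the boundary of the polar cone, so that
`u + (δ / ‖x‖) • x` is still polar to `C`. -/
theorem exists_inner_le_neg_mul_norm (hω : IsCompact ω) (hωC : ω ⊆ interior (polarCone C)) :
    ∃ δ > 0, ∀ u ∈ ω, ∀ x ∈ C, ⟪x, u⟫ ≤ -(δ * ‖x‖) := by
  obtain ⟨δ, hδ, hsub⟩ := hω.exists_cthickening_subset_open isOpen_interior hωC
  refine ⟨δ, hδ, fun u hu x hx => ?_⟩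
  rcases eq_or_ne x 0 with rfl | hx₀
  · simp
  have hx_pos : 0 < ‖x‖ := norm_pos_iff.2 hx₀
  have hmem : u + (δ / ‖x‖) • x ∈ cthickening δ ω := by
    refine mem_cthickening_of_dist_le _ u _ _ hu ?_
    rw [dist_self_add_left, norm_smul, Real.norm_of_nonneg (by positivity),
      div_mul_cancel₀ _ hx_pos.ne']
  have hpolar : ⟪u + (δ / ‖x‖) • x, x⟫ ≤ 0 := interior_subset (hsub hmem) x hx
  have hexpand : ⟪u + (δ / ‖x‖) • x, x⟫ = ⟪x, u⟫ + δ * ‖x‖ := by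
    rw [inner_add_left, real_inner_smul_left, real_inner_self_eq_norm_sq, real_inner_comm]
    field_simp
  linarith

theorem add_nsmul_mem_of_mem_recessionCone {x z : En n} (hz : z ∈ recessionCone K) (hx : x ∈ K)
    (k : ℕ) : x + k • z ∈ K := by
  induction k with
  | zero => simpa using hx
  | succ k ih => simpa only [succ_nsmul, add_assoc] using hz _ ih

theorem recessionCone_subset_of_subset (hcl : IsClosed C)
    (hsmul : ∀ x ∈ C, ∀ c : ℝ, 0 ≤ c → c • x ∈ C) (hK : K.Nonempty) (hKC : K ⊆ C) :
    recessionCone K ⊆ C := by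
  intro z hz
  obtain ⟨x, hx⟩ := hK
  have hlim : Tendsto (fun k : ℕ => (1 / ((k : ℝ) + 1)) • x + z) atTop (𝓝 z) := by
    simpa using ((tendsto_one_div_add_atTop_nhds_zero_nat (𝕜 := ℝ)).smul_const x).add_const z
  refine hcl.mem_of_tendsto hlim (.of_forall fun k => ?_)
  have hmem := hsmul _ (hKC (add_nsmul_mem_of_mem_recessionCone hz hx (k + 1)))
    (1 / ((k : ℝ) + 1)) (by positivity)
  rwa [← Nat.cast_smul_eq_nsmul ℝ, smul_add, smul_smul, Nat.cast_succ,
    one_div_mul_cancel (by positivity), one_smul] at hmem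

theorem subset_recessionCone_wulffShape (hconv : Convex ℝ C)
    (hsmul : ∀ x ∈ C, ∀ c : ℝ, 0 ≤ c → c • x ∈ C) (hpolar : ω ⊆ polarCone C) :
    C ⊆ recessionCone (wulffShape C ω f) := by
  intro z hz x hx
  obtain ⟨hxC, hxω⟩ := mem_wulffShape.1 hx
  refine mem_wulffShape.2 ⟨?_, fun u hu => ?_⟩
  · simpa [midpoint_eq_smul_add, smul_smul] using hsmul _ (hconv.midpoint_mem hxC hz) 2 zero_le_two
  · have hzu : ⟪z, u⟫ ≤ 0 := real_inner_comm z u ▸ hpolar hu z hz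
    rw [inner_add_left]
    linarith [hxω u hu]

theorem isPseudoCone_wulffShape (hcl : IsClosed C) (hconv : Convex ℝ C)
    (hsmul : ∀ x ∈ C, ∀ c : ℝ, 0 ≤ c → c • x ∈ C) (hω : ω.Nonempty) (hf₀ : ∀ u ∈ ω, 0 < f u)
    (hne : (wulffShape C ω f).Nonempty) : IsPseudoCone (wulffShape C ω f) := by
  refine ⟨hne, isClosed_wulffShape hcl f, convex_wulffShape hconv f, fun hzero => ?_, ?_⟩
  · obtain ⟨u, hu⟩ := hω
    have hle : ⟪(0 : En n), u⟫ ≤ -f u := (mem_wulffShape.1 hzero).2 u hu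
    rw [inner_zero_left] at hle
    linarith [hf₀ u hu]
  · rintro c hc _ ⟨x, hx, rfl⟩
    obtain ⟨hxC, hxω⟩ := mem_wulffShape.1 hx
    refine mem_wulffShape.2 ⟨hsmul x hxC c (zero_le_one.trans hc), fun u hu => ?_⟩
    calc ⟪c • x, u⟫ = c * ⟪x, u⟫ := real_inner_smul_left _ _ _
      _ ≤ 1 * ⟪x, u⟫ := mul_le_mul_of_nonpos_right hc (by linarith [hxω u hu, hf₀ u hu])
      _ ≤ -f u := by rw [one_mul]; exact hxω u hu

theorem inKClass_wulffShape (hcl : IsClosed C) (hconv : Convex ℝ C)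
    (hsmul : ∀ x ∈ C, ∀ c : ℝ, 0 ≤ c → c • x ∈ C) (hω : ω.Nonempty) (hpolar : ω ⊆ polarCone C)
    (hf₀ : ∀ u ∈ ω, 0 < f u) (hne : (wulffShape C ω f).Nonempty) :
    InKClass C ω (wulffShape C ω f) := by
  refine ⟨⟨isPseudoCone_wulffShape hcl hconv hsmul hω hf₀ hne, ?_⟩, ?_⟩
  · exact (recessionCone_subset_of_subset hcl hsmul hne inter_subset_left).antisymm
      (subset_recessionCone_wulffShape hconv hsmul hpolar)
  · simpa [wulffShape] using (wulffShape_neg_suppFn_wulffShape hne).symm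

end Cone

section WulffRatio

variable {n : ℕ} {C ω : Set (En n)} {ν μ : Measure (En n)} [IsFiniteMeasure μ]
  {p δ : ℝ} {f g : En n → ℝ}

/-- The functional `φ_μ(f) = ν([f]) / ∫_ω f^p dμ`, with an arbitrary measure `ν` in place of the
Gaussian measure. -/
noncomputable def wulffRatio (ν μ : Measure (En n)) (C ω : Set (En n)) (p : ℝ) (f : En n → ℝ) : ℝ :=
  ν.real (wulffShape C ω f) / ∫ u in ω, f u ^ p ∂μ

theorem wulffRatio_le_wulffRatio_neg_suppFn (hω : IsCompact ω) (hμ : μ ω ≠ 0) (hp : p ≤ 0)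
    (hf : ContinuousOn f ω) (hf₀ : ∀ u ∈ ω, 0 < f u) (hne : (wulffShape C ω f).Nonempty)
    (hcont : ContinuousOn (-suppFn (wulffShape C ω f)) ω) :
    wulffRatio ν μ C ω p f ≤ wulffRatio ν μ C ω p (-suppFn (wulffShape C ω f)) := by
  have hle := fun u hu => le_neg_suppFn_wulffShape (u := u) hne hu
  rw [wulffRatio, wulffRatio, wulffShape_neg_suppFn_wulffShape hne]
  exact div_le_div_of_nonneg_left measureReal_nonneg
    (setIntegral_rpow_pos hω hμ hcont fun u hu => (hf₀ u hu).trans_le (hle u hu))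
    (setIntegral_rpow_le_of_le hω hp hf hf₀ hcont hle)

variable [IsFiniteMeasure ν]

theorem tendsto_measureReal_wulffShape_sub_const (hC : IsClosed C) (f : En n → ℝ) :
    Tendsto (fun ε => ν.real (wulffShape C ω (fun u => f u - ε))) (𝓝[>] 0)
      (𝓝 (ν.real (wulffShape C ω f))) := by
  have hlim := tendsto_measure_biInter_gt (μ := ν) (a := (0 : ℝ))
    (s := fun ε => wulffShape C ω (fun u => f u - ε))
    (fun ε _ => (isClosed_wulffShape hC _).measurableSet.nullMeasurableSet)
    (fun i j _ hij => wulffShape_subset_of_le fun u _ => sub_le_sub_left hij (f u))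
    ⟨1, one_pos, measure_ne_top _ _⟩
  rw [biInter_wulffShape_sub_const] at hlim
  exact (ENNReal.tendsto_toReal (measure_ne_top _ _)).comp hlim

/-- If `|f - g| ≤ ε` on `ω`, then `φ_μ(f)` is at most the quotient of the measure of `[g - ε]` and
the integral of `(g + ε)^p`, which tends to `φ_μ(g)` as `ε → 0`. -/
theorem exists_forall_wulffRatio_lt (hC : IsClosed C) (hω : IsCompact ω) (hμ : μ ω ≠ 0)
    (hp : p ≤ 0) (hg : ContinuousOn g ω) (hg₀ : ∀ u ∈ ω, 0 < g u) {c : ℝ}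
    (hc : wulffRatio ν μ C ω p g < c) :
    ∃ ε > 0, ∀ f, ContinuousOn f ω → (∀ u ∈ ω, 0 < f u) → (∀ u ∈ ω, |f u - g u| < ε) →
      wulffRatio ν μ C ω p f < c := by
  have hlim : Tendsto (fun ε => ν.real (wulffShape C ω (fun u => g u - ε)) /
      ∫ u in ω, (g u + ε) ^ p ∂μ) (𝓝[>] 0) (𝓝 (wulffRatio ν μ C ω p g)) :=
    (tendsto_measureReal_wulffShape_sub_const hC g).div
      (tendsto_setIntegral_add_const_rpow hω hp hg hg₀) (setIntegral_rpow_pos hω hμ hg hg₀).ne'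
  obtain ⟨ε, hεc, hε : 0 < ε⟩ :=
    ((hlim.eventually_lt_const hc).and self_mem_nhdsWithin).exists
  refine ⟨ε, hε, fun f hf hf₀ hfg => lt_of_le_of_lt ?_ hεc⟩
  have hgε : ContinuousOn (fun u => g u + ε) ω := hg.add continuousOn_const
  refine div_le_div₀ measureReal_nonneg (measureReal_mono (wulffShape_subset_of_le fun u hu => ?_))
    (setIntegral_rpow_pos hω hμ hgε fun u hu => add_pos (hg₀ u hu) hε)
    (setIntegral_rpow_le_of_le hω hp hf hf₀ hgε fun u hu => ?_)
  all_goals linarith [abs_lt.1 (hfg u hu)]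

theorem exists_isMaxOn_wulffRatio (hC : IsClosed C) (hω : IsCompact ω) (hμ : μ ω ≠ 0) (hp : p ≤ 0)
    {L : ℝ≥0} {a b : ℝ} (ha : 0 < a) (hne : (lipschitzIcc ω L a b).Nonempty) :
    ∃ g ∈ lipschitzIcc ω L a b,
      IsMaxOn (wulffRatio ν μ C ω p) (lipschitzIcc ω L a b) g := by
  have hpos : ∀ f ∈ lipschitzIcc ω L a b, ∀ u ∈ ω, 0 < f u := fun f hf u hu =>
    ha.trans_le (hf.2 hu).1
  refine exists_isMaxOn_lipschitzIcc hω (fun g hg c hc => ?_) hne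
  obtain ⟨ε, hε, h⟩ := exists_forall_wulffRatio_lt hC hω hμ hp hg.1.continuousOn (hpos g hg) hc
  exact ⟨ε, hε, fun f hf => h f hf.1.continuousOn (hpos f hf)⟩

theorem wulffRatio_mul_measureReal_le (hω : IsCompact ω) (hμ : μ ω ≠ 0) (hp : p ≤ 0)
    (hf : ContinuousOn f ω) (hf₀ : ∀ u ∈ ω, 0 < f u) {b : ℝ} (hb : 0 < b)
    (hfb : ∀ u ∈ ω, f u ≤ b) (hdist : ∀ x ∈ wulffShape C ω f, b ≤ ‖x‖) :
    wulffRatio ν μ C ω p f * μ.real ω ≤ b ^ (-p) * ν.real {x | b ≤ ‖x‖} := by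
  have hμω : 0 < μ.real ω := ENNReal.toReal_pos hμ (measure_ne_top _ _)
  have : 0 < b ^ p := Real.rpow_pos_of_pos hb p
  calc wulffRatio ν μ C ω p f * μ.real ω
      ≤ ν.real {x | b ≤ ‖x‖} / (b ^ p * μ.real ω) * μ.real ω := by
        refine mul_le_mul_of_nonneg_right ?_ hμω.le
        exact div_le_div₀ measureReal_nonneg (measureReal_mono hdist) (by positivity)
          (rpow_mul_measureReal_le_setIntegral_rpow hω hp hf hf₀ hfb)
    _ = b ^ (-p) * ν.real {x | b ≤ ‖x‖} := by
        rw [Real.rpow_neg hb.le]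
        field_simp

theorem exists_lipschitzIcc_of_le_wulffRatio (hω : IsCompact ω) (hω_norm : ∀ u ∈ ω, ‖u‖ ≤ 1)
    (hδ : 0 < δ) (hneg : ∀ u ∈ ω, ∀ x ∈ C, ⟪x, u⟫ ≤ -(δ * ‖x‖)) (hμ : μ ω ≠ 0) (hp : p < 0)
    (hν : Integrable (fun x => ‖x‖ ^ (-p)) ν) {c : ℝ} (hc : 0 < c) :
    ∃ (L : ℝ≥0) (a b : ℝ), 0 < a ∧ ∀ f, ContinuousOn f ω → (∀ u ∈ ω, 0 < f u) →
      c ≤ wulffRatio ν μ C ω p f →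
        ∃ h ∈ lipschitzIcc ω L a b, wulffRatio ν μ C ω p f ≤ wulffRatio ν μ C ω p h := by
  have hμω : 0 < μ.real ω := ENNReal.toReal_pos hμ (measure_ne_top _ _)
  obtain ⟨u₀, hu₀⟩ : ω.Nonempty := nonempty_of_measure_ne_zero hμ
  obtain ⟨b₀, hb₀, b₁, hb₁⟩ := exists_Icc_of_le_rpow_mul_measureReal_le_norm (neg_pos.2 hp) hν
    (mul_pos hc hμω)
  refine ⟨(b₁ / δ).toNNReal, δ * b₀, b₁, mul_pos hδ hb₀, fun f hf hf₀ hcf => ?_⟩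
  have hne : (wulffShape C ω f).Nonempty := by
    by_contra hempty
    rw [wulffRatio, not_nonempty_iff_eq_empty.1 hempty, measureReal_empty, zero_div] at hcf
    exact hcf.not_gt hc
  set K := wulffShape C ω f
  set r := infDist 0 K
  have hnegK : ∀ u ∈ ω, ∀ x ∈ K, ⟪x, u⟫ ≤ -(δ * ‖x‖) := fun u hu x hx => hneg u hu x hx.1
  have hmem : ∀ {s t : ℝ}, r ∈ Icc s t → -suppFn K ∈ lipschitzIcc ω (t / δ).toNNReal (δ * s) t :=
    neg_suppFn_mem_lipschitzIcc hne hδ hω_norm hnegK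
  obtain ⟨hlip, hval⟩ := hmem (left_mem_Icc.2 le_rfl)
  have hle : wulffRatio ν μ C ω p f ≤ wulffRatio ν μ C ω p (-suppFn K) :=
    wulffRatio_le_wulffRatio_neg_suppFn hω hμ hp.le hf hf₀ hne hlip.continuousOn
  have hr : 0 < r :=
    ((hf₀ u₀ hu₀).trans_le (le_neg_suppFn_wulffShape hne hu₀)).trans_le (hval hu₀).2
  refine ⟨-suppFn K, hmem (hb₁ r hr ?_), hle⟩
  calc c * μ.real ω ≤ wulffRatio ν μ C ω p (-suppFn K) * μ.real ω := by gcongr; exact hcf.trans hle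
    _ ≤ r ^ (-p) * ν.real {x | r ≤ ‖x‖} := by
      refine wulffRatio_mul_measureReal_le hω hμ hp.le hlip.continuousOn
        (fun u hu => (mul_pos hδ hr).trans_le (hval hu).1) hr (fun u hu => (hval hu).2)
        fun x hx => ?_
      rw [wulffShape_neg_suppFn_wulffShape hne] at hx
      simpa using infDist_le_dist_of_mem (x := 0) hx

theorem exists_forall_wulffRatio_le (hC : IsClosed C) (hω : IsCompact ω)
    (hω_norm : ∀ u ∈ ω, ‖u‖ ≤ 1) (hδ : 0 < δ) (hneg : ∀ u ∈ ω, ∀ x ∈ C, ⟪x, u⟫ ≤ -(δ * ‖x‖))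
    (hμ : μ ω ≠ 0) (hp : p < 0) (hν : Integrable (fun x => ‖x‖ ^ (-p)) ν) :
    ∃ g, ContinuousOn g ω ∧ (∀ u ∈ ω, 0 < g u) ∧ ∀ f, ContinuousOn f ω → (∀ u ∈ ω, 0 < f u) →
      wulffRatio ν μ C ω p f ≤ wulffRatio ν μ C ω p g := by
  by_cases hpos : ∃ f, ContinuousOn f ω ∧ (∀ u ∈ ω, 0 < f u) ∧ 0 < wulffRatio ν μ C ω p f
  · obtain ⟨f₁, hf₁, hf₁₀, hf₁_pos⟩ := hpos
    obtain ⟨L, a, b, ha, hreduce⟩ :=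
      exists_lipschitzIcc_of_le_wulffRatio hω hω_norm hδ hneg hμ hp hν hf₁_pos
    obtain ⟨h₁, hh₁, hf₁h₁⟩ := hreduce f₁ hf₁ hf₁₀ le_rfl
    obtain ⟨g, hg, hmax⟩ :=
      exists_isMaxOn_wulffRatio (ν := ν) hC hω hμ hp.le ha ⟨h₁, hh₁⟩
    refine ⟨g, hg.1.continuousOn, fun u hu => ha.trans_le (hg.2 hu).1, fun f hf hf₀ => ?_⟩
    rcases le_total (wulffRatio ν μ C ω p f) (wulffRatio ν μ C ω p f₁) with hle | hge
    · exact hle.trans (hf₁h₁.trans (hmax hh₁))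
    · obtain ⟨h, hh, hfh⟩ := hreduce f hf hf₀ hge
      exact hfh.trans (hmax hh)
  · push Not at hpos
    refine ⟨fun _ => 1, continuousOn_const, fun _ _ => one_pos, fun f hf hf₀ => ?_⟩
    exact (hpos f hf hf₀).trans (div_nonneg measureReal_nonneg (by simp))

end WulffRatio

theorem exists_mem_ne_zero_of_interior_nonempty {E : Type*} [NormedAddCommGroup E]
    [NormedSpace ℝ E] [Nontrivial E] {s : Set E} (hs : (interior s).Nonempty) :
    ∃ x ∈ s, x ≠ 0 := by
  by_contra! h
  have hsub : interior s ⊆ interior {0} := interior_mono h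
  rw [interior_singleton] at hsub
  exact hs.ne_empty (subset_empty_iff.1 hsub)

theorem exists_maximizer_phi_mu_general {n : ℕ} {C : Set (En n)} (hC : IsPointedCone C)
    {ω : Set (En n)} (hω : IsCompact ω) (hωΩ : ω ⊆ OmegaSet C) (ν μ : Measure (En n))
    [IsFiniteMeasure ν] [IsFiniteMeasure μ] (hμ : μ ω ≠ 0) {p : ℝ} (hp : p < 0)
    (hν : Integrable (fun x => ‖x‖ ^ (-p)) ν) :
    ∃ K : Set (En n), InKClass C ω K ∧
      ∀ f : En n → ℝ, ContinuousOn f ω → (∀ u ∈ ω, 0 < f u) →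
        ν.real (wulffShape C ω f) / ∫ u in ω, f u ^ p ∂μ ≤
          ν.real K / ∫ u in ω, (-suppFn K u) ^ p ∂μ := by
  obtain ⟨hcl, hconv, hsmul, hint, -⟩ := hC
  have hω_norm : ∀ u ∈ ω, ‖u‖ = 1 := fun u hu => mem_sphere_zero_iff_norm.1 (hωΩ hu).1
  obtain ⟨u₀, hu₀⟩ : ω.Nonempty := nonempty_of_measure_ne_zero hμ
  have : Nontrivial (En n) := nontrivial_of_ne u₀ 0 (norm_ne_zero_iff.1 (by simp [hω_norm u₀ hu₀]))
  obtain ⟨x, hxC, hx₀⟩ := exists_mem_ne_zero_of_interior_nonempty hint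
  obtain ⟨δ, hδ, hneg⟩ := exists_inner_le_neg_mul_norm hω fun u hu => (hωΩ hu).2
  obtain ⟨g, hg, hg₀, hmax⟩ := exists_forall_wulffRatio_le (ν := ν) hcl hω
    (fun u hu => (hω_norm u hu).le) hδ hneg hμ hp hν
  have hne : (wulffShape C ω g).Nonempty :=
    wulffShape_nonempty hsmul hδ hneg hxC hx₀ (hω.bddAbove_image hg)
  have hcont : ContinuousOn (-suppFn (wulffShape C ω g)) ω :=
    (lipschitzOnWith_suppFn hne hδ (fun u hu => (hω_norm u hu).le)
      fun u hu x hx => hneg u hu x hx.1).continuousOn.neg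
  refine ⟨wulffShape C ω g, inKClass_wulffShape hcl hconv hsmul ⟨u₀, hu₀⟩
    (fun u hu => interior_subset (hωΩ hu).2) hg₀ hne, fun f hf hf₀ => ?_⟩
  have hle := (hmax f hf hf₀).trans
    (wulffRatio_le_wulffRatio_neg_suppFn hω hμ hp.le hg hg₀ hne hcont)
  rwa [wulffRatio, wulffRatio, wulffShape_neg_suppFn_wulffShape hne] at hle

section Gaussian

theorem integrable_norm_rpow_mul_exp_neg_mul_norm_sq {E : Type*} [NormedAddCommGroup E]
    [NormedSpace ℝ E] [FiniteDimensional ℝ E] [MeasurableSpace E] [BorelSpace E]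
    (μ : Measure E) [μ.IsAddHaarMeasure] {b q : ℝ} (hb : 0 < b) (hq : 0 ≤ q) :
    Integrable (fun x => ‖x‖ ^ q * Real.exp (-b * ‖x‖ ^ 2)) μ := by
  rcases subsingleton_or_nontrivial E with _ | _
  · exact .of_finite
  rw [integrable_fun_norm_addHaar μ (f := fun r => r ^ q * Real.exp (-b * r ^ 2))]
  have hs : -1 < ((Module.finrank ℝ E - 1 : ℕ) : ℝ) + q :=
    neg_one_lt_zero.trans_le (by positivity)
  refine (integrableOn_rpow_mul_exp_neg_mul_sq hb hs).congr_fun (fun r hr => ?_) measurableSet_Ioi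
  simp only [Real.rpow_add hr, Real.rpow_natCast, smul_eq_mul, mul_assoc]

/-- The density of the standard Gaussian measure on `ℝⁿ`. -/
noncomputable def gaussianDensity (n : ℕ) (x : En n) : ℝ :=
  (2 * Real.pi) ^ (-(n : ℝ) / 2) * Real.exp (-‖x‖ ^ 2 / 2)

variable {n : ℕ}

theorem gaussianDensity_nonneg (x : En n) : 0 ≤ gaussianDensity n x := by
  unfold gaussianDensity
  positivity

theorem measurable_gaussianDensity : Measurable (gaussianDensity n) := by
  unfold gaussianDensity
  fun_prop

theorem integrable_norm_rpow_mul_gaussianDensity {q : ℝ} (hq : 0 ≤ q) :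
    Integrable (fun x => ‖x‖ ^ q * gaussianDensity n x) := by
  refine ((integrable_norm_rpow_mul_exp_neg_mul_norm_sq (volume : Measure (En n))
    one_half_pos hq).const_mul ((2 * Real.pi) ^ (-(n : ℝ) / 2))).congr (.of_forall fun x => ?_)
  simp only [gaussianDensity]
  ring_nf

theorem integrable_gaussianDensity : Integrable (gaussianDensity n) := by
  simpa using integrable_norm_rpow_mul_gaussianDensity le_rfl

/-- The standard Gaussian measure as a `Measure`; `gaussianMeasure` only gives its values. -/
noncomputable def gaussianWithDensity (n : ℕ) : Measure (En n) :=
  volume.withDensity fun x => ENNReal.ofReal (gaussianDensity n x)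

instance isFiniteMeasure_gaussianWithDensity : IsFiniteMeasure (gaussianWithDensity n) :=
  isFiniteMeasure_withDensity_ofReal integrable_gaussianDensity.2

theorem gaussianMeasure_eq_measureReal (A : Set (En n)) :
    gaussianMeasure n A = (gaussianWithDensity n).real A := by
  rw [gaussianMeasure, ← integral_const_mul, measureReal_def, gaussianWithDensity,
    withDensity_apply' _ A]
  exact integral_eq_lintegral_of_nonneg_ae (.of_forall gaussianDensity_nonneg)
    measurable_gaussianDensity.aestronglyMeasurable

theorem integrable_norm_rpow_gaussianWithDensity {q : ℝ} (hq : 0 ≤ q) :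
    Integrable (fun x => ‖x‖ ^ q) (gaussianWithDensity n) := by
  rw [gaussianWithDensity, integrable_withDensity_iff_integrable_smul'
    measurable_gaussianDensity.ennreal_ofReal (by simp)]
  simpa [gaussianDensity_nonneg, mul_comm] using integrable_norm_rpow_mul_gaussianDensity hq

end Gaussian

/-- Existence of a maximizer for `φ_μ(f) = γⁿ([f]) / ∫_ω f^p dμ` (with `p < 0`) over positive
continuous functions on `ω`, attained at the absolute support function of some `K ∈ 𝒦(C,ω)`. -/
theorem exists_maximizer_phi_mu {n : ℕ} (hn : 1 ≤ n) (C : Set (En n)) (hC : IsPointedCone C)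
    (ω : Set (En n)) (hω : ω.Nonempty) (hωc : IsCompact ω) (hωΩ : ω ⊆ OmegaSet C)
    (μ : Measure (En n)) [IsFiniteMeasure μ] (hμsupp : μ ωᶜ = 0) (hμ : μ ω ≠ 0)
    (p : ℝ) (hp : p < 0) :
    ∃ K : Set (En n), InKClass C ω K ∧
      ∀ f : En n → ℝ, ContinuousOn f ω → (∀ u ∈ ω, 0 < f u) →
        gaussianMeasure n (wulffShape C ω f) / ∫ u in ω, f u ^ p ∂μ ≤
          gaussianMeasure n K / ∫ u in ω, (-suppFn K u) ^ p ∂μ := by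
  simpa only [gaussianMeasure_eq_measureReal] using exists_maximizer_phi_mu_general hC hωc hωΩ
    (gaussianWithDensity n) μ hμ hp (integrable_norm_rpow_gaussianWithDensity (neg_pos.2 hp).le)
end

section
/- Let C ⊆ ℝⁿ be a pointed n-dimensional closed convex cone, let K and L be C-pseudo-cones, and let 0 < t < 1. Then γⁿ((1−t)K + tL) ≥ γⁿ(K)^{1−t} · γⁿ(L)^{t}, with equality if and only if K = L. Here (1−t)K + tL denotes the Minkowski combination {(1−t)x + ty : x ∈ K, y ∈ L}. -/
open MeasureTheory Metric Set Filter
open scoped RealInnerProductSpace Pointwise Topology ENNReal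

/-!
The Prékopa–Leindler inequality holds on `ℝ`, by the one-dimensional Brunn–Minkowski inequality
for superlevel sets, and it passes to products and linear images, hence to every Haar measure.
If `φ` is strongly concave with modulus `m`, then tilting the measure by `exp φ` gains a factor
`exp (a b m / 2 * ‖x - y‖²)` in its hypothesis. A point `z = a x + b y` with `x ∈ K` and `y ∈ L`
satisfies `d(z, K) + d(z, L) ≤ ‖x - y‖`, so the tilted measure `μ` obeys
`μ(K)^a μ(L)^b ≤ ∫_{aK + bL} exp (-a b m / 2 * (d(z, K) + d(z, L))²) dμ(z)`.
Equality in the Brunn–Minkowski inequality for `μ` thus forces almost every point of `aK + bL` into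
`K ∩ L`, so that `μ(K)^a μ(L)^b ≤ μ(K ∩ L) ≤ min (μ(K), μ(L))`. Then `K ∩ L` has full measure in
both `K` and `L`, and closed convex sets with interior points must coincide. The Gaussian measure is
the case `φ x = -‖x‖² / 2`, and a `C`-pseudo-cone has interior points because it contains a
translate of `C`.
-/

theorem volume_add_volume_le_volume_add_of_isCompact {A B : Set ℝ} (hA : IsCompact A)
    (hB : IsCompact B) (hA' : A.Nonempty) (hB' : B.Nonempty) :
    volume A + volume B ≤ volume (A + B) := by
  obtain ⟨x, hxA, hx⟩ := hA.exists_isGreatest hA'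
  obtain ⟨y, hyB, hy⟩ := hB.exists_isLeast hB'
  -- The translates `y + A` and `x + B` lie in `A + B` and meet only at `x + y`.
  have hdisj : AEDisjoint volume (y +ᵥ A) (x +ᵥ B) := by
    refine measure_mono_null (t := {x + y}) ?_ (by simp)
    rintro _ ⟨⟨p, hp, rfl⟩, q, hq, hpq⟩
    simp only [vadd_eq_add] at hpq
    simp only [vadd_eq_add, mem_singleton_iff]
    linarith [hx hp, hy hq]
  calc volume A + volume B = volume (y +ᵥ A) + volume (x +ᵥ B) := by simp only [measure_vadd]
    _ = volume ((y +ᵥ A) ∪ (x +ᵥ B)) :=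
      (measure_union₀ (hB.vadd x).measurableSet.nullMeasurableSet hdisj).symm
    _ ≤ volume (A + B) := measure_mono <| union_subset
      (add_comm A B ▸ vadd_set_subset_add hyB) (vadd_set_subset_add hxA)

theorem volume_add_volume_le_volume_add {A B : Set ℝ} (hA : MeasurableSet A)
    (hB : MeasurableSet B) (hA' : A.Nonempty) (hB' : B.Nonempty) :
    volume A + volume B ≤ volume (A + B) := by
  obtain ⟨x, hx⟩ := hA'
  obtain ⟨y, hy⟩ := hB'
  rw [hA.measure_eq_iSup_isCompact, hB.measure_eq_iSup_isCompact]
  simp only [iSup_and']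
  refine ENNReal.biSup_add_biSup_le' (p := fun P => P ⊆ A ∧ IsCompact P)
    (q := fun Q => Q ⊆ B ∧ IsCompact Q) ⟨∅, by simp⟩ ⟨∅, by simp⟩ fun P hP Q hQ => ?_
  calc volume P + volume Q ≤ volume (insert x P) + volume (insert y Q) := by
        gcongr <;> exact subset_insert _ _
    _ ≤ volume (insert x P + insert y Q) :=
      volume_add_volume_le_volume_add_of_isCompact (hP.2.insert x) (hQ.2.insert y)
        (insert_nonempty x P) (insert_nonempty y Q)
    _ ≤ volume (A + B) := measure_mono <|
      add_subset_add (insert_subset hx hP.1) (insert_subset hy hQ.1)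

section WeightedMeans

variable {a b : ℝ}

theorem rpow_mul_rpow_le_ofReal_mul_add (ha : 0 < a) (hb : 0 < b) (hab : a + b = 1)
    (p q : ℝ≥0∞) : p ^ a * q ^ b ≤ ENNReal.ofReal a * p + ENNReal.ofReal b * q := by
  have h := ENNReal.young_inequality (p ^ a) (q ^ b) (Real.HolderConjugate.inv_inv ha hb hab)
  rwa [ENNReal.rpow_rpow_inv ha.ne', ENNReal.rpow_rpow_inv hb.ne', ENNReal.ofReal_inv_of_pos ha,
    ENNReal.ofReal_inv_of_pos hb, div_eq_mul_inv, div_eq_mul_inv, inv_inv, inv_inv, mul_comm p,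
    mul_comm q] at h

theorem rpow_mul_rpow_self (ha : 0 ≤ a) (hb : 0 ≤ b) (hab : a + b = 1) (p : ℝ≥0∞) :
    p ^ a * p ^ b = p := by
  rw [← ENNReal.rpow_add_of_nonneg _ _ ha hb, hab, ENNReal.rpow_one]

theorem eq_of_rpow_mul_rpow_le {p q r : ℝ≥0∞} (ha : 0 < a) (hb : 0 < b) (hab : a + b = 1)
    (hq0 : q ≠ 0) (hq : q ≠ ∞) (hrp : r ≤ p) (hrq : r ≤ q) (h : p ^ a * q ^ b ≤ r) : r = p := by
  refine hrp.eq_of_not_lt fun hlt => h.not_gt ?_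
  have hqb : q ^ b ≠ 0 := by simp [hq0, hq]
  calc r = r ^ a * r ^ b := (rpow_mul_rpow_self ha.le hb.le hab r).symm
    _ ≤ r ^ a * q ^ b := by gcongr
    _ < p ^ a * q ^ b := ENNReal.mul_lt_mul_left hqb (ENNReal.rpow_ne_top_of_nonneg hb.le hq)
      (ENNReal.rpow_lt_rpow hlt ha)

end WeightedMeans

theorem lintegral_eq_lintegral_meas_ofReal_lt {α : Type*} [MeasurableSpace α] (μ : Measure α)
    {f : α → ℝ≥0∞} (hf : Measurable f) (hf' : ∀ x, f x ≠ ∞) :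
    ∫⁻ x, f x ∂μ = ∫⁻ s in Ioi (0 : ℝ), μ {x | ENNReal.ofReal s < f x} := by
  have h := lintegral_eq_lintegral_meas_lt μ (Eventually.of_forall fun x => ENNReal.toReal_nonneg)
    hf.ennreal_toReal.aemeasurable
  simp only [ENNReal.ofReal_toReal (hf' _)] at h
  rw [h]
  refine setLIntegral_congr_fun measurableSet_Ioi fun s hs => ?_
  simp only [ENNReal.ofReal_lt_iff_lt_toReal (le_of_lt hs) (hf' _)]

theorem antitone_meas_ofReal_lt {α : Type*} [MeasurableSpace α] (μ : Measure α)
    (f : α → ℝ≥0∞) : Antitone fun s : ℝ => μ {x | ENNReal.ofReal s < f x} :=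
  fun _ _ hst => measure_mono fun _ hx => (ENNReal.ofReal_le_ofReal hst).trans_lt hx

theorem tendsto_lintegral_min_natCast {α : Type*} [MeasurableSpace α] {μ : Measure α}
    {f : α → ℝ≥0∞} (hf : Measurable f) :
    Tendsto (fun n : ℕ => ∫⁻ x, min (f x) n ∂μ) atTop (𝓝 (∫⁻ x, f x ∂μ)) := by
  refine lintegral_tendsto_of_tendsto_of_monotone
    (fun n => (hf.min measurable_const).aemeasurable)
    (Eventually.of_forall fun x i j hij => ?_) (Eventually.of_forall fun x => ?_)
  · exact min_le_min_left _ (Nat.cast_le.2 hij)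
  · simpa using (tendsto_const_nhds (x := f x)).min ENNReal.tendsto_nat_nhds_top

/-- The Prékopa–Leindler inequality for a measure `μ` on a real vector space, for all weights
`a`, `b`. The three functions take values in `[0, ∞]`, so that no integrability is required. -/
def PrekopaLeindler {E : Type*} [AddCommGroup E] [Module ℝ E] [MeasurableSpace E]
    (μ : Measure E) : Prop :=
  ∀ ⦃a b : ℝ⦄, 0 < a → 0 < b → a + b = 1 → ∀ ⦃f g h : E → ℝ≥0∞⦄,
    Measurable f → Measurable g → Measurable h →
    (∀ x y, f x ^ a * g y ^ b ≤ h (a • x + b • y)) →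
    (∫⁻ x, f x ∂μ) ^ a * (∫⁻ x, g x ∂μ) ^ b ≤ ∫⁻ x, h x ∂μ

section Line

variable {a b : ℝ} {f g h : ℝ → ℝ≥0∞}

theorem ofReal_mul_volume_add_le_volume_superlevel (ha : 0 < a) (hb : 0 < b) (hab : a + b = 1)
    (hf : Measurable f) (hg : Measurable g) (H : ∀ x y, f x ^ a * g y ^ b ≤ h (a • x + b • y))
    {r : ℝ≥0∞} (hrf : ∃ x, r < f x) (hrg : ∃ x, r < g x) :
    ENNReal.ofReal a * volume {x | r < f x} + ENNReal.ofReal b * volume {x | r < g x} ≤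
      volume {x | r < h x} := by
  have hsub : a • {x | r < f x} + b • {x | r < g x} ⊆ {x | r < h x} := by
    rintro _ ⟨_, ⟨x, hx, rfl⟩, _, ⟨y, hy, rfl⟩, rfl⟩
    calc r = r ^ a * r ^ b := (rpow_mul_rpow_self ha.le hb.le hab r).symm
      _ < f x ^ a * g y ^ b :=
        ENNReal.mul_lt_mul (ENNReal.rpow_lt_rpow hx ha) (ENNReal.rpow_lt_rpow hy hb)
      _ ≤ h (a • x + b • y) := H x y
  calc ENNReal.ofReal a * volume {x | r < f x} + ENNReal.ofReal b * volume {x | r < g x}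
      = volume (a • {x | r < f x}) + volume (b • {x | r < g x}) := by
        simp only [Measure.addHaar_smul_of_nonneg _ ha.le, Measure.addHaar_smul_of_nonneg _ hb.le,
          Module.finrank_self, pow_one]
    _ ≤ volume (a • {x | r < f x} + b • {x | r < g x}) := volume_add_volume_le_volume_add
        ((measurableSet_lt measurable_const hf).const_smul₀ a)
        ((measurableSet_lt measurable_const hg).const_smul₀ b)
        (Nonempty.smul_set hrf) (Nonempty.smul_set hrg)
    _ ≤ volume {x | r < h x} := measure_mono hsub

theorem lintegral_rpow_mul_rpow_le_of_iSup_eq_one (ha : 0 < a) (hb : 0 < b) (hab : a + b = 1)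
    (hf : Measurable f) (hg : Measurable g) (hh : Measurable h)
    (H : ∀ x y, f x ^ a * g y ^ b ≤ h (a • x + b • y)) (hf1 : ⨆ x, f x = 1) (hg1 : ⨆ x, g x = 1) :
    (∫⁻ x, f x) ^ a * (∫⁻ x, g x) ^ b ≤ ∫⁻ x, h x := by
  have hf_le (x) : f x ≤ 1 := hf1 ▸ le_iSup f x
  have hg_le (x) : g x ≤ 1 := hg1 ▸ le_iSup g x
  have hlevel (s : ℝ) : ENNReal.ofReal a * volume {x | ENNReal.ofReal s < f x} +
      ENNReal.ofReal b * volume {x | ENNReal.ofReal s < g x} ≤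
        volume {x | ENNReal.ofReal s < min (h x) 1} := by
    rcases lt_or_ge (ENNReal.ofReal s) 1 with hs | hs
    · simpa only [lt_min_iff, hs, and_true] using
        ofReal_mul_volume_add_le_volume_superlevel ha hb hab hf hg H
          (lt_iSup_iff.1 (hf1 ▸ hs)) (lt_iSup_iff.1 (hg1 ▸ hs))
    · simp [((hf_le _).trans hs).not_gt, ((hg_le _).trans hs).not_gt]
  calc (∫⁻ x, f x) ^ a * (∫⁻ x, g x) ^ b
      ≤ ENNReal.ofReal a * (∫⁻ x, f x) + ENNReal.ofReal b * ∫⁻ x, g x :=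
        rpow_mul_rpow_le_ofReal_mul_add ha hb hab _ _
    _ = ∫⁻ s in Ioi (0 : ℝ), (ENNReal.ofReal a * volume {x | ENNReal.ofReal s < f x} +
          ENNReal.ofReal b * volume {x | ENNReal.ofReal s < g x}) := by
        rw [lintegral_eq_lintegral_meas_ofReal_lt _ hf fun x => ((hf_le x).trans_lt (by simp)).ne,
          lintegral_eq_lintegral_meas_ofReal_lt _ hg fun x => ((hg_le x).trans_lt (by simp)).ne,
          lintegral_add_left ((antitone_meas_ofReal_lt _ f).measurable.const_mul _),
          lintegral_const_mul _ (antitone_meas_ofReal_lt _ f).measurable,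
          lintegral_const_mul _ (antitone_meas_ofReal_lt _ g).measurable]
    _ ≤ ∫⁻ s in Ioi (0 : ℝ), volume {x | ENNReal.ofReal s < min (h x) 1} :=
        lintegral_mono hlevel
    _ = ∫⁻ x, min (h x) 1 := (lintegral_eq_lintegral_meas_ofReal_lt _ (hh.min measurable_const)
        fun x => ((min_le_right _ _).trans_lt (by simp)).ne).symm
    _ ≤ ∫⁻ x, h x := lintegral_mono fun x => min_le_left _ _

theorem lintegral_rpow_mul_rpow_le_of_iSup_ne_top (ha : 0 < a) (hb : 0 < b) (hab : a + b = 1)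
    (hf : Measurable f) (hg : Measurable g) (hh : Measurable h)
    (H : ∀ x y, f x ^ a * g y ^ b ≤ h (a • x + b • y)) (hf' : ⨆ x, f x ≠ ∞)
    (hg' : ⨆ x, g x ≠ ∞) : (∫⁻ x, f x) ^ a * (∫⁻ x, g x) ^ b ≤ ∫⁻ x, h x := by
  rcases eq_or_ne (⨆ x, f x) 0 with hf0 | hf0
  · simp [ENNReal.iSup_eq_zero.1 hf0, ha]
  rcases eq_or_ne (⨆ x, g x) 0 with hg0 | hg0
  · simp [ENNReal.iSup_eq_zero.1 hg0, hb]
  set M := ⨆ x, f x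
  set N := ⨆ x, g x
  have hM : M⁻¹ ≠ ∞ := ENNReal.inv_ne_top.2 hf0
  have hN : N⁻¹ ≠ ∞ := ENNReal.inv_ne_top.2 hg0
  have hmul (p q : ℝ≥0∞) :
      (M⁻¹ * p) ^ a * (N⁻¹ * q) ^ b = M⁻¹ ^ a * N⁻¹ ^ b * (p ^ a * q ^ b) := by
    rw [ENNReal.mul_rpow_of_nonneg _ _ ha.le, ENNReal.mul_rpow_of_nonneg _ _ hb.le,
      mul_mul_mul_comm]
  have key := lintegral_rpow_mul_rpow_le_of_iSup_eq_one ha hb hab (hf.const_mul M⁻¹)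
    (hg.const_mul N⁻¹) (hh.const_mul (M⁻¹ ^ a * N⁻¹ ^ b))
    (fun x y => (hmul _ _).trans_le (mul_le_mul_right (H x y) _))
    (by rw [← ENNReal.mul_iSup, ENNReal.inv_mul_cancel hf0 hf'])
    (by rw [← ENNReal.mul_iSup, ENNReal.inv_mul_cancel hg0 hg'])
  rw [lintegral_const_mul _ hf, lintegral_const_mul _ hg, lintegral_const_mul _ hh, hmul] at key
  refine (ENNReal.mul_le_mul_iff_right ?_ ?_).1 key
  · simp [ENNReal.rpow_eq_zero_iff, hf', hg', hM, hN, ha.not_gt, hb.not_gt]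
  · exact ENNReal.mul_ne_top (ENNReal.rpow_ne_top_of_nonneg ha.le hM)
      (ENNReal.rpow_ne_top_of_nonneg hb.le hN)

theorem prekopaLeindler_real : PrekopaLeindler (volume : Measure ℝ) := by
  intro a b ha hb hab f g h hf hg hh H
  rcases eq_or_ne (∫⁻ x, f x) 0 with hf0 | hf0
  · simp [hf0, ha]
  rcases eq_or_ne (∫⁻ x, g x) 0 with hg0 | hg0
  · simp [hg0, hb]
  have htrunc (n : ℕ) : (∫⁻ x, min (f x) n) ^ a * (∫⁻ x, min (g x) n) ^ b ≤ ∫⁻ x, h x := by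
    refine lintegral_rpow_mul_rpow_le_of_iSup_ne_top ha hb hab (hf.min measurable_const)
      (hg.min measurable_const) hh (fun x y => le_trans ?_ (H x y)) ?_ ?_
    · gcongr <;> exact min_le_left _ _
    all_goals exact ((iSup_le fun x => min_le_right _ _).trans_lt (ENNReal.natCast_lt_top n)).ne
  refine le_of_tendsto' (ENNReal.Tendsto.mul ((tendsto_lintegral_min_natCast hf).ennrpow_const a)
    (.inl ?_) ((tendsto_lintegral_min_natCast hg).ennrpow_const b) (.inl ?_)) htrunc
  · simp [ENNReal.rpow_eq_zero_iff, hf0, ha.not_gt]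
  · simp [ENNReal.rpow_eq_zero_iff, hg0, hb.not_gt]

end Line

section Tensorization

variable {E F : Type*} [AddCommGroup E] [Module ℝ E] [MeasurableSpace E]
  [AddCommGroup F] [Module ℝ F] [MeasurableSpace F] {μ : Measure E} {ν : Measure F}

theorem PrekopaLeindler.prod [SFinite ν] (hμ : PrekopaLeindler μ) (hν : PrekopaLeindler ν) :
    PrekopaLeindler (μ.prod ν) := by
  intro a b ha hb hab f g h hf hg hh H
  simp only [lintegral_prod _ hf.aemeasurable, lintegral_prod _ hg.aemeasurable,
    lintegral_prod _ hh.aemeasurable]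
  refine hμ ha hb hab hf.lintegral_prod_right' hg.lintegral_prod_right' hh.lintegral_prod_right'
    fun x x' => ?_
  exact hν ha hb hab (hf.comp measurable_prodMk_left) (hg.comp measurable_prodMk_left)
    (hh.comp measurable_prodMk_left) fun y y' => H (x, y) (x', y')

theorem PrekopaLeindler.map (hμ : PrekopaLeindler μ) (e : E →ₗ[ℝ] F) (he : Measurable e) :
    PrekopaLeindler (μ.map e) := by
  intro a b ha hb hab f g h hf hg hh H
  rw [lintegral_map hf he, lintegral_map hg he, lintegral_map hh he]
  exact hμ ha hb hab (hf.comp he) (hg.comp he) (hh.comp he) fun x y => by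
    simpa using H (e x) (e y)

theorem PrekopaLeindler.smul (hμ : PrekopaLeindler μ) (c : ℝ≥0∞) :
    PrekopaLeindler (c • μ) := by
  intro a b ha hb hab f g h hf hg hh H
  simp only [lintegral_smul_measure, smul_eq_mul]
  calc (c * ∫⁻ x, f x ∂μ) ^ a * (c * ∫⁻ x, g x ∂μ) ^ b
      = c * ((∫⁻ x, f x ∂μ) ^ a * (∫⁻ x, g x ∂μ) ^ b) := by
        rw [ENNReal.mul_rpow_of_nonneg _ _ ha.le, ENNReal.mul_rpow_of_nonneg _ _ hb.le,
          mul_mul_mul_comm, rpow_mul_rpow_self ha.le hb.le hab]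
    _ ≤ c * ∫⁻ x, h x ∂μ := by gcongr; exact hμ ha hb hab hf hg hh H

theorem prekopaLeindler_dirac (x : E) : PrekopaLeindler (Measure.dirac x) := by
  intro a b _ _ hab f g h hf hg hh H
  simpa only [lintegral_dirac' _ hf, lintegral_dirac' _ hg, lintegral_dirac' _ hh,
    Convex.combo_self hab] using H x x

end Tensorization

section Haar

variable {E F : Type*} [NormedAddCommGroup E] [NormedSpace ℝ E] [MeasurableSpace E] [BorelSpace E]
  [NormedAddCommGroup F] [NormedSpace ℝ F] [FiniteDimensional ℝ F] [MeasurableSpace F]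
  [BorelSpace F] {μ : Measure E} [μ.IsAddHaarMeasure]

theorem PrekopaLeindler.of_continuousLinearEquiv (hμ : PrekopaLeindler μ) (e : E ≃L[ℝ] F)
    (ν : Measure F) [ν.IsAddHaarMeasure] : PrekopaLeindler ν := by
  have := e.isAddHaarMeasure_map μ
  rw [Measure.isAddLeftInvariant_eq_smul ν (μ.map e)]
  exact (hμ.map e.toLinearMap e.continuous.measurable).smul _

theorem prekopaLeindler_pi (n : ℕ) : PrekopaLeindler (volume : Measure (Fin n → ℝ)) := by
  induction n with
  | zero =>
    rw [volume_pi, Measure.pi_of_empty _ 0]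
    exact prekopaLeindler_dirac 0
  | succ n ih =>
    exact (prekopaLeindler_real.prod ih).of_continuousLinearEquiv
      (Fin.consLinearEquiv ℝ fun _ => ℝ).toContinuousLinearEquiv volume

theorem prekopaLeindler_of_isAddHaarMeasure (ν : Measure F) [ν.IsAddHaarMeasure] :
    PrekopaLeindler ν :=
  (prekopaLeindler_pi (Module.finrank ℝ F)).of_continuousLinearEquiv
    (ContinuousLinearEquiv.ofFinrankEq (by simp)) ν

end Haar

theorem infDist_add_infDist_le_norm_sub {E : Type*} [SeminormedAddCommGroup E] [NormedSpace ℝ E]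
    {K L : Set E} {x y : E} (hx : x ∈ K) (hy : y ∈ L) {a b : ℝ} (ha : 0 ≤ a) (hb : 0 ≤ b)
    (hab : a + b = 1) :
    infDist (a • x + b • y) K + infDist (a • x + b • y) L ≤ ‖x - y‖ := by
  have hz : a • x + b • y ∈ segment ℝ x y := ⟨a, b, ha, hb, hab, rfl⟩
  calc infDist (a • x + b • y) K + infDist (a • x + b • y) L
      ≤ dist (a • x + b • y) x + dist (a • x + b • y) y :=
        add_le_add (infDist_le_dist_of_mem hx) (infDist_le_dist_of_mem hy)
    _ = dist x y := by rw [dist_comm _ x, dist_add_dist_of_mem_segment hz]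
    _ = ‖x - y‖ := dist_eq_norm x y

section ConvexBodies

variable {E : Type*} [AddCommGroup E] [Module ℝ E] [TopologicalSpace E]
  [IsTopologicalAddGroup E] [ContinuousSMul ℝ E] [MeasurableSpace E] [OpensMeasurableSpace E]
  {μ : Measure E} [μ.IsOpenPosMeasure] [IsFiniteMeasure μ] {K L : Set E} {a b : ℝ}

theorem subset_of_measure_inter_eq (hKc : Convex ℝ K) (hKi : (interior K).Nonempty)
    (hL : IsClosed L) (h : μ (K ∩ L) = μ K) : K ⊆ L := by
  have hdiff : μ (K \ L) = 0 := by
    have hadd := measure_inter_add_sdiff (μ := μ) K hL.measurableSet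
    rw [h] at hadd
    simpa using hadd
  have hint : interior K \ L = ∅ := ((isOpen_interior.sdiff hL).measure_eq_zero_iff μ).1
    (measure_mono_null (sdiff_subset_sdiff_left interior_subset) hdiff)
  calc K ⊆ closure K := subset_closure
    _ = closure (interior K) := (hKc.closure_interior_eq_closure_of_nonempty_interior hKi).symm
    _ ⊆ L := closure_minimal (sdiff_eq_empty.1 hint) hL

theorem eq_of_rpow_mul_rpow_le_measure_inter (hK : IsClosed K) (hL : IsClosed L)
    (hKc : Convex ℝ K) (hLc : Convex ℝ L) (hKi : (interior K).Nonempty)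
    (hLi : (interior L).Nonempty) (ha : 0 < a) (hb : 0 < b) (hab : a + b = 1)
    (h : μ K ^ a * μ L ^ b ≤ μ (K ∩ L)) : K = L := by
  have hK0 : μ K ≠ 0 := (Measure.measure_pos_of_nonempty_interior μ hKi).ne'
  have hL0 : μ L ≠ 0 := (Measure.measure_pos_of_nonempty_interior μ hLi).ne'
  have hmK : μ (K ∩ L) ≤ μ K := measure_mono inter_subset_left
  have hmL : μ (K ∩ L) ≤ μ L := measure_mono inter_subset_right
  refine Subset.antisymm (subset_of_measure_inter_eq (μ := μ) hKc hKi hL ?_)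
    (subset_of_measure_inter_eq (μ := μ) hLc hLi hK ?_)
  · exact eq_of_rpow_mul_rpow_le ha hb hab hL0 (measure_ne_top _ _) hmK hmL h
  · rw [inter_comm]
    rw [mul_comm] at h
    exact eq_of_rpow_mul_rpow_le hb ha (by rwa [add_comm]) hK0 (measure_ne_top _ _) hmL hmK h

end ConvexBodies

section StronglyLogConcave

variable {E : Type*} [NormedAddCommGroup E] [NormedSpace ℝ E] {φ : E → ℝ} {m a b : ℝ}
  {K L : Set E}

theorem exp_div_rpow_mul_rpow_le (hφ : StrongConcaveOn univ m φ) (ha : 0 ≤ a) (hb : 0 ≤ b)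
    (hab : a + b = 1) {Z : ℝ} (hZ : 0 ≤ Z) (x y : E) :
    (Real.exp (φ x) / Z) ^ a * (Real.exp (φ y) / Z) ^ b *
        Real.exp (a * b * (m / 2 * ‖x - y‖ ^ 2)) ≤ Real.exp (φ (a • x + b • y)) / Z := by
  have hconc := hφ.2 (mem_univ x) (mem_univ y) ha hb hab
  simp only [smul_eq_mul] at hconc
  calc _ = Real.exp (φ x * a + φ y * b + a * b * (m / 2 * ‖x - y‖ ^ 2)) / Z := by
        rw [Real.div_rpow (Real.exp_pos _).le hZ, Real.div_rpow (Real.exp_pos _).le hZ,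
          ← Real.exp_mul, ← Real.exp_mul, div_mul_div_comm,
          ← Real.rpow_add_of_nonneg hZ ha hb, hab, Real.rpow_one, div_mul_eq_mul_div,
          ← Real.exp_add, ← Real.exp_add]
    _ ≤ Real.exp (φ (a • x + b • y)) / Z := by gcongr; linarith

variable [MeasurableSpace E] {ν : Measure E}

theorem PrekopaLeindler.tilted (hν : PrekopaLeindler ν) (hφm : Measurable φ)
    (hφ : StrongConcaveOn univ m φ) (ha : 0 < a) (hb : 0 < b) (hab : a + b = 1)
    {f g h : E → ℝ≥0∞} (hf : Measurable f) (hg : Measurable g) (hh : Measurable h)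
    (H : ∀ x y, f x ^ a * g y ^ b ≤
      ENNReal.ofReal (Real.exp (a * b * (m / 2 * ‖x - y‖ ^ 2))) * h (a • x + b • y)) :
    (∫⁻ x, f x ∂ν.tilted φ) ^ a * (∫⁻ x, g x ∂ν.tilted φ) ^ b ≤ ∫⁻ x, h x ∂ν.tilted φ := by
  simp only [lintegral_tilted]
  set Z := ∫ x, Real.exp (φ x) ∂ν
  have hZ : 0 ≤ Z := integral_nonneg fun x => (Real.exp_pos _).le
  have hpos (x) : 0 ≤ Real.exp (φ x) / Z := div_nonneg (Real.exp_pos _).le hZ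
  have hdens : Measurable fun x => ENNReal.ofReal (Real.exp (φ x) / Z) := by fun_prop
  refine hν ha hb hab (hdens.mul hf) (hdens.mul hg) (hdens.mul hh) fun x y => ?_
  calc (ENNReal.ofReal (Real.exp (φ x) / Z) * f x) ^ a *
        (ENNReal.ofReal (Real.exp (φ y) / Z) * g y) ^ b
      = ENNReal.ofReal ((Real.exp (φ x) / Z) ^ a * (Real.exp (φ y) / Z) ^ b) *
          (f x ^ a * g y ^ b) := by
        rw [ENNReal.mul_rpow_of_nonneg _ _ ha.le, ENNReal.mul_rpow_of_nonneg _ _ hb.le,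
          mul_mul_mul_comm, ENNReal.ofReal_rpow_of_nonneg (hpos x) ha.le,
          ENNReal.ofReal_rpow_of_nonneg (hpos y) hb.le,
          ← ENNReal.ofReal_mul (Real.rpow_nonneg (hpos x) a)]
    _ ≤ ENNReal.ofReal ((Real.exp (φ x) / Z) ^ a * (Real.exp (φ y) / Z) ^ b) *
          (ENNReal.ofReal (Real.exp (a * b * (m / 2 * ‖x - y‖ ^ 2))) * h (a • x + b • y)) := by
        exact mul_le_mul_right (H x y) _
    _ = ENNReal.ofReal ((Real.exp (φ x) / Z) ^ a * (Real.exp (φ y) / Z) ^ b *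
          Real.exp (a * b * (m / 2 * ‖x - y‖ ^ 2))) * h (a • x + b • y) := by
        rw [← mul_assoc, ← ENNReal.ofReal_mul
          (mul_nonneg (Real.rpow_nonneg (hpos x) a) (Real.rpow_nonneg (hpos y) b))]
    _ ≤ ENNReal.ofReal (Real.exp (φ (a • x + b • y)) / Z) * h (a • x + b • y) := by
        gcongr
        exact exp_div_rpow_mul_rpow_le hφ ha.le hb.le hab hZ x y

variable [OpensMeasurableSpace E]

theorem PrekopaLeindler.tilted_rpow_mul_rpow_le_setLIntegral (hν : PrekopaLeindler ν)
    (hφm : Measurable φ) (hφ : StrongConcaveOn univ m φ) (hm : 0 ≤ m) (ha : 0 < a) (hb : 0 < b)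
    (hab : a + b = 1) (hK : MeasurableSet K) (hL : MeasurableSet L) :
    ν.tilted φ K ^ a * ν.tilted φ L ^ b ≤ ∫⁻ z in a • K + b • L, ENNReal.ofReal
      (Real.exp (-(a * b * (m / 2 * (infDist z K + infDist z L) ^ 2)))) ∂ν.tilted φ := by
  have hS := measurableSet_toMeasurable (ν.tilted φ) (a • K + b • L)
  rw [← Measure.restrict_toMeasurable (measure_ne_top _ _), ← lintegral_indicator hS,
    ← lintegral_indicator_one hK, ← lintegral_indicator_one hL]
  refine hν.tilted hφm hφ ha hb hab (measurable_one.indicator hK) (measurable_one.indicator hL)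
    (Measurable.indicator (by fun_prop) hS) fun x y => ?_
  by_cases hx : x ∈ K
  swap
  · simp [hx, ha]
  by_cases hy : y ∈ L
  swap
  · simp [hy, hb]
  have hz : a • x + b • y ∈ toMeasurable (ν.tilted φ) (a • K + b • L) :=
    subset_toMeasurable _ _ (add_mem_add (smul_mem_smul_set hx) (smul_mem_smul_set hy))
  rw [indicator_of_mem hx, indicator_of_mem hy, indicator_of_mem hz,
    ← ENNReal.ofReal_mul (Real.exp_pos _).le, ← Real.exp_add]
  simp only [Pi.one_apply, ENNReal.one_rpow, mul_one, ENNReal.one_le_ofReal, Real.one_le_exp_iff,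
    le_add_neg_iff_le]
  gcongr
  · exact add_nonneg infDist_nonneg infDist_nonneg
  · exact infDist_add_infDist_le_norm_sub hx hy ha.le hb.le hab

theorem PrekopaLeindler.tilted_rpow_mul_rpow_le_tilted_add (hν : PrekopaLeindler ν)
    (hφm : Measurable φ) (hφ : ConcaveOn ℝ univ φ) (ha : 0 < a) (hb : 0 < b)
    (hab : a + b = 1) (hK : MeasurableSet K) (hL : MeasurableSet L) :
    ν.tilted φ K ^ a * ν.tilted φ L ^ b ≤ ν.tilted φ (a • K + b • L) := by
  have hφ0 : StrongConcaveOn univ 0 φ := strongConcaveOn_zero.2 hφ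
  simpa using hν.tilted_rpow_mul_rpow_le_setLIntegral hφm hφ0 le_rfl ha hb hab hK hL

theorem PrekopaLeindler.tilted_add_le_tilted_closure_inter_closure (hν : PrekopaLeindler ν)
    (hφm : Measurable φ) (hφ : StrongConcaveOn univ m φ) (hm : 0 < m) (ha : 0 < a) (hb : 0 < b)
    (hab : a + b = 1) (hK : MeasurableSet K) (hL : MeasurableSet L) (hK' : K.Nonempty)
    (hL' : L.Nonempty) (h : ν.tilted φ (a • K + b • L) ≤ ν.tilted φ K ^ a * ν.tilted φ L ^ b) :
    ν.tilted φ (a • K + b • L) ≤ ν.tilted φ (closure K ∩ closure L) := by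
  set μ := ν.tilted φ
  set w : E → ℝ≥0∞ := fun z =>
    ENNReal.ofReal (Real.exp (-(a * b * (m / 2 * (infDist z K + infDist z L) ^ 2)))) with hw
  have hw1 (z) : w z ≤ 1 := by
    refine ENNReal.ofReal_le_one.2 (Real.exp_le_one_iff.2 (neg_nonpos.2 ?_))
    positivity
  have hint : ∫⁻ _ in a • K + b • L, 1 ∂μ ≤ ∫⁻ z in a • K + b • L, w z ∂μ := by
    rw [setLIntegral_one]
    exact h.trans (hν.tilted_rpow_mul_rpow_le_setLIntegral hφm hφ hm.le ha hb hab hK hL)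
  have hae : w =ᵐ[μ.restrict (a • K + b • L)] fun _ => 1 :=
    ae_eq_of_ae_le_of_lintegral_le (Eventually.of_forall hw1)
      ((lintegral_mono hw1).trans_lt (by simp)).ne measurable_const.aemeasurable hint
  have hmem (z) (hz : w z = 1) : z ∈ closure K ∩ closure L := by
    have hsum : infDist z K + infDist z L = 0 := by
      simpa [hw, ha.ne', hb.ne', hm.ne'] using hz
    rw [add_eq_zero_iff_of_nonneg infDist_nonneg infDist_nonneg] at hsum
    exact ⟨(mem_closure_iff_infDist_zero hK').2 hsum.1,
      (mem_closure_iff_infDist_zero hL').2 hsum.2⟩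
  calc μ (a • K + b • L) = μ.restrict (a • K + b • L) univ := by simp
    _ ≤ μ.restrict (a • K + b • L) (closure K ∩ closure L) :=
      measure_mono_ae (hae.mono fun z hz _ => hmem z hz)
    _ ≤ μ (closure K ∩ closure L) := Measure.restrict_apply_le _ _

theorem PrekopaLeindler.tilted_add_eq_iff [ν.IsOpenPosMeasure] (hν : PrekopaLeindler ν)
    (hφm : Measurable φ) (hφ : StrongConcaveOn univ m φ) (hm : 0 < m)
    (hφi : Integrable (fun x => Real.exp (φ x)) ν) (ha : 0 < a) (hb : 0 < b) (hab : a + b = 1)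
    (hK : IsClosed K) (hL : IsClosed L) (hKc : Convex ℝ K) (hLc : Convex ℝ L)
    (hKi : (interior K).Nonempty) (hLi : (interior L).Nonempty) :
    ν.tilted φ (a • K + b • L) = ν.tilted φ K ^ a * ν.tilted φ L ^ b ↔ K = L := by
  have := (absolutelyContinuous_tilted hφi).isOpenPosMeasure
  refine ⟨fun h => ?_, ?_⟩
  · have hle := hν.tilted_add_le_tilted_closure_inter_closure hφm hφ hm ha hb hab
      hK.measurableSet hL.measurableSet (hKi.mono interior_subset) (hLi.mono interior_subset) h.le
    rw [hK.closure_eq, hL.closure_eq, h] at hle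
    exact eq_of_rpow_mul_rpow_le_measure_inter hK hL hKc hLc hKi hLi ha hb hab hle
  · rintro rfl
    rw [← hKc.add_smul ha.le hb.le, hab, one_smul, rpow_mul_rpow_self ha.le hb.le hab]

end StronglyLogConcave

section Gaussian

variable (E : Type*) [NormedAddCommGroup E] [InnerProductSpace ℝ E]

theorem strongConcaveOn_neg_norm_sq_div_two :
    StrongConcaveOn univ 1 fun x : E => -‖x‖ ^ 2 / 2 := by
  rw [strongConcaveOn_iff_convex]
  have hzero (x : E) : -‖x‖ ^ 2 / 2 + 1 / 2 * ‖x‖ ^ 2 = 0 := by ring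
  simpa only [hzero] using concaveOn_const (0 : ℝ) convex_univ

variable [FiniteDimensional ℝ E] [MeasurableSpace E] [BorelSpace E]

theorem integral_exp_neg_norm_sq_div_two :
    ∫ x : E, Real.exp (-‖x‖ ^ 2 / 2) = (2 * Real.pi) ^ (Module.finrank ℝ E / 2 : ℝ) := by
  have h := GaussianFourier.integral_rexp_neg_mul_sq_norm (V := E) (one_half_pos (α := ℝ))
  rw [div_div_eq_mul_div, div_one, mul_comm Real.pi] at h
  simpa only [neg_mul, one_div_mul_eq_div, neg_div] using h

theorem integrable_exp_neg_norm_sq_div_two :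
    Integrable fun x : E => Real.exp (-‖x‖ ^ 2 / 2) := by
  refine Integrable.of_integral_ne_zero ?_
  rw [integral_exp_neg_norm_sq_div_two]
  positivity

end Gaussian

theorem gaussianMeasure_eq_toReal_tilted (n : ℕ) (A : Set (En n)) :
    gaussianMeasure n A = (volume.tilted (fun x : En n => -‖x‖ ^ 2 / 2) A).toReal := by
  rw [tilted_apply_eq_ofReal_integral, ENNReal.toReal_ofReal (by positivity), integral_div,
    integral_exp_neg_norm_sq_div_two, finrank_euclideanSpace_fin, gaussianMeasure, neg_div,
    Real.rpow_neg (by positivity), div_eq_inv_mul _ ((2 * Real.pi) ^ (_ : ℝ))]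

theorem IsCPseudoCone.interior_nonempty {n : ℕ} {C K : Set (En n)} (hK : IsCPseudoCone C K)
    (hC : (interior C).Nonempty) : (interior K).Nonempty := by
  obtain ⟨⟨⟨x, hx⟩, -⟩, rfl⟩ := hK
  refine hC.vadd_set.mono (interior_maximal ?_ (isOpen_interior.vadd x))
  rintro _ ⟨z, hz, rfl⟩
  exact interior_subset hz x hx

theorem gaussian_log_concave_pseudo_cones_general {n : ℕ} {K L : Set (En n)}
    (hK : IsClosed K) (hL : IsClosed L) (hKc : Convex ℝ K) (hLc : Convex ℝ L)
    (hKi : (interior K).Nonempty) (hLi : (interior L).Nonempty)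
    {t : ℝ} (ht0 : 0 < t) (ht1 : t < 1) :
    gaussianMeasure n ((1 - t) • K + t • L) ≥
        gaussianMeasure n K ^ (1 - t) * gaussianMeasure n L ^ t ∧
      (gaussianMeasure n ((1 - t) • K + t • L) =
          gaussianMeasure n K ^ (1 - t) * gaussianMeasure n L ^ t ↔ K = L) := by
  have ht1' : 0 < 1 - t := sub_pos.2 ht1
  have hPL := prekopaLeindler_of_isAddHaarMeasure (volume : Measure (En n))
  have hmeas : Measurable fun x : En n => -‖x‖ ^ 2 / 2 := by fun_prop
  have hconc := strongConcaveOn_neg_norm_sq_div_two (En n)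
  simp only [gaussianMeasure_eq_toReal_tilted, ENNReal.toReal_rpow, ← ENNReal.toReal_mul, ge_iff_le]
  set μ := volume.tilted fun x : En n => -‖x‖ ^ 2 / 2
  have htop : μ K ^ (1 - t) * μ L ^ t ≠ ∞ :=
    ENNReal.mul_ne_top (ENNReal.rpow_ne_top_of_nonneg ht1'.le (measure_ne_top _ _))
      (ENNReal.rpow_ne_top_of_nonneg ht0.le (measure_ne_top _ _))
  rw [ENNReal.toReal_le_toReal htop (measure_ne_top _ _),
    ENNReal.toReal_eq_toReal_iff' (measure_ne_top _ _) htop]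
  exact ⟨hPL.tilted_rpow_mul_rpow_le_tilted_add hmeas (hconc.strictConcaveOn one_pos).concaveOn
      ht1' ht0 (sub_add_cancel 1 t) hK.measurableSet hL.measurableSet,
    hPL.tilted_add_eq_iff hmeas hconc one_pos (integrable_exp_neg_norm_sq_div_two (En n))
      ht1' ht0 (sub_add_cancel 1 t) hK hL hKc hLc hKi hLi⟩

/-- Log-concavity of the Gaussian measure on `C`-pseudo-cones, with equality iff `K = L`:
`γⁿ((1-t)K + tL) ≥ γⁿ(K)^{1-t} γⁿ(L)^t` for `0 < t < 1`. -/
theorem gaussian_log_concave_pseudo_cones {n : ℕ} (hn : 1 ≤ n) (C K L : Set (En n))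
    (hC : IsPointedCone C) (hK : IsCPseudoCone C K) (hL : IsCPseudoCone C L)
    (t : ℝ) (ht0 : 0 < t) (ht1 : t < 1) :
    gaussianMeasure n ((1 - t) • K + t • L) ≥
        gaussianMeasure n K ^ (1 - t) * gaussianMeasure n L ^ t ∧
      (gaussianMeasure n ((1 - t) • K + t • L) =
          gaussianMeasure n K ^ (1 - t) * gaussianMeasure n L ^ t ↔ K = L) :=
  gaussian_log_concave_pseudo_cones_general hK.1.2.1 hL.1.2.1 hK.1.2.2.1 hL.1.2.2.1
    (hK.interior_nonempty hC.2.2.2.1) (hL.interior_nonempty hC.2.2.2.1) ht0 ht1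
end
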